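/- Let p ≥ 3 be a prime, let a and s be positive integers, and set c = 1/(s(p−1)). Let e : ℤ → ℤ be an a-periodic function with 0 ≤ e_i ≤ p−1 for all i, set ω = e_0 + e_1 + ⋯ + e_{a−1}, and for each integer j set q(j) = −∑_{i=0}^{a−1} (i+1)·e_{i+j}. Let K be a field equipped with a valuation v : K → ℝ ∪ {∞} (v(x+y) ≥ min(v(x),v(y)), v(xy) = v(x)+v(y), v(0) = ∞), and let α = ∑_{k≥0} α_k u^k be a formal power series over K with v(α_k) ≥ k·c for all k ≥ 0. Fix an integer j, and let f = ∑_{k≥1} f_k u^k be a formal power series over K with zero constant term satisfying v(f_k) ≥ (q(j)/a)·c + p·c + (k−1)·c for all k ≥ 1. Then for every integer m ≥ 1, one has v( ∑_{k=1}^{pm−e_j} α_{pm−e_j−k}·f_k ) ≥ (q(j+1)/a)·c + p·c + (m−1)·c. -/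

import Mathlib

open scoped BigOperators

/-!
Multiplying by a series with `v (α k) ≥ k c` does not worsen a bound `v (f k) ≥ b + k c`, so the
coefficient of `u ^ (p m - e j)` in `α f` has valuation at least `b + (p m - e j) c`. Compared with
the bound wanted for the coefficient of `u ^ m`, this gains `((p - 1) m - e j) c`. The exponents
satisfy `q (j + 1) = q j + ω - a e j`, and `ω ≤ a (p - 1)`, so passing from the `j`-th component to
the next costs `(ω / a - e j) c`, which is at most the gain because `m ≥ 1`.
-/

section Periodic

variable {a : ℕ}

theorem sum_range_add_eq_of_periodic {M : Type*} [AddCommGroup M] {e : ℤ → M}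
    (he : Function.Periodic e (a : ℤ)) (j : ℤ) :
    ∑ i ∈ Finset.range a, e (i + j) = ∑ i ∈ Finset.range a, e i := by
  have shift (j : ℤ) :
      ∑ i ∈ Finset.range a, e (i + (j + 1)) = ∑ i ∈ Finset.range a, e (i + j) := by
    have telescope := Finset.sum_range_sub (fun i : ℕ => e (i + j)) a
    have ends : e ((a : ℤ) + j) = e ((0 : ℕ) + j) := by
      rw [add_comm, he, Nat.cast_zero, zero_add]
    rw [ends, sub_self, Finset.sum_sub_distrib, sub_eq_zero] at telescope
    simpa only [Nat.cast_succ, add_assoc, add_comm (1 : ℤ)] using telescope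
  induction j with
  | zero => simp only [add_zero]
  | succ j ih => rw [shift, ih]
  | pred j ih => rw [← shift, sub_add_cancel, ih]

/-- The exponent `q(e, j)` of the uniformizer `π_{as}` in the `j`-th tail component of `𝒟_{e,s}`,
for a sequence `e` of period `a`. -/
def tailExponent (e : ℤ → ℤ) (a : ℕ) (j : ℤ) : ℤ :=
  -∑ i ∈ Finset.range a, ((i : ℤ) + 1) * e (i + j)

theorem tailExponent_add_one {e : ℤ → ℤ} (he : Function.Periodic e (a : ℤ)) (j : ℤ) :
    tailExponent e a (j + 1) =
      tailExponent e a j + ∑ i ∈ Finset.range a, e i - a * e j := by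
  have telescope : ∑ i ∈ Finset.range a, (((i : ℤ) + 1) * e (i + (j + 1)) - i * e (i + j)) =
      a * e j := by
    have h := Finset.sum_range_sub (fun i : ℕ => (i : ℤ) * e (i + j)) a
    simpa only [Nat.cast_succ, Nat.cast_zero, zero_mul, sub_zero, add_assoc, add_comm (1 : ℤ),
      add_comm (a : ℤ) j, he j] using h
  have split : ∑ i ∈ Finset.range a, ((i : ℤ) + 1) * e (i + j) =
      ∑ i ∈ Finset.range a, i * e (i + j) + ∑ i ∈ Finset.range a, e i := by
    simp only [add_mul, one_mul, Finset.sum_add_distrib, sum_range_add_eq_of_periodic he]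
  rw [Finset.sum_sub_distrib] at telescope
  rw [tailExponent, tailExponent, split, ← telescope]
  ring

theorem tailExponent_add_one_div_add_le {F : Type*} [Field F] [LinearOrder F]
    [IsStrictOrderedRing F] {p : ℕ} (hp : 1 ≤ p) (ha : 0 < a) {e : ℤ → ℤ}
    (he : Function.Periodic e (a : ℤ))
    (hω : ∑ i ∈ Finset.range a, e i ≤ a * ((p : ℤ) - 1)) (j : ℤ) {m : ℤ} (hm : 1 ≤ m) :
    (tailExponent e a (j + 1) : F) / a + m ≤ (tailExponent e a j : F) / a + (p * m - e j) := by
  have gain : (a : ℤ) * (p - 1) ≤ a * (p - 1) * m :=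
    le_mul_of_one_le_right (mul_nonneg (by positivity) (by lia)) hm
  have integral : tailExponent e a (j + 1) + a * m ≤ tailExponent e a j + a * (p * m - e j) := by
    rw [tailExponent_add_one he]
    linarith
  have ha' : (0 : F) < a := Nat.cast_pos.2 ha
  have scaled : (tailExponent e a (j + 1) + a * m : F) ≤
      tailExponent e a j + a * (p * m - e j) := by
    exact_mod_cast integral
  rw [div_add' _ _ _ ha'.ne', div_add' _ _ _ ha'.ne']
  exact div_le_div_of_nonneg_right (by linarith) ha'.le

end Periodic

section Valuation

theorem le_map_sum_of_min_le_map_add {ι R Γ : Type*} [AddCommMonoid R] [LinearOrder Γ]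
    {v : R → Γ} (hv_add : ∀ x y, min (v x) (v y) ≤ v (x + y)) {b : Γ} (hb : b ≤ v 0)
    {s : Finset ι} {g : ι → R} (hg : ∀ i ∈ s, b ≤ v (g i)) : b ≤ v (∑ i ∈ s, g i) :=
  Finset.sum_induction g (b ≤ v ·) (fun _ _ hx hy => (le_min hx hy).trans (hv_add _ _)) hb hg

theorem le_map_convolution {R Γ : Type*} [NonUnitalNonAssocSemiring R] [AddCommGroup Γ]
    [LinearOrder Γ] [IsOrderedAddMonoid Γ] {v : R → WithTop Γ}
    (hv_add : ∀ x y, min (v x) (v y) ≤ v (x + y)) (hv_mul : ∀ x y, v x + v y ≤ v (x * y))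
    (hv_zero : v 0 = ⊤) {α f : ℤ → R} {b₁ b₂ c : Γ} {N : ℤ}
    (hα : ∀ k, 0 ≤ k → ((b₁ + k • c : Γ) : WithTop Γ) ≤ v (α k))
    (hf : ∀ k, N ≤ k → ((b₂ + k • c : Γ) : WithTop Γ) ≤ v (f k)) (n : ℤ) :
    ((b₁ + b₂ + n • c : Γ) : WithTop Γ) ≤ v (∑ k ∈ Finset.Icc N n, α (n - k) * f k) := by
  refine le_map_sum_of_min_le_map_add hv_add (hv_zero ▸ le_top) fun k hk => ?_
  obtain ⟨hNk, hkn⟩ := Finset.mem_Icc.1 hk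
  have degrees : b₁ + b₂ + n • c = b₁ + (n - k) • c + (b₂ + k • c) := by
    rw [add_add_add_comm, ← add_smul, sub_add_cancel]
  calc ((b₁ + b₂ + n • c : Γ) : WithTop Γ)
      = ((b₁ + (n - k) • c : Γ) : WithTop Γ) + ((b₂ + k • c : Γ) : WithTop Γ) := by
        rw [degrees, WithTop.coe_add]
    _ ≤ v (α (n - k)) + v (f k) := add_le_add (hα _ (sub_nonneg.2 hkn)) (hf k hNk)
    _ ≤ v (α (n - k) * f k) := hv_mul _ _

end Valuation

theorem stmt1_general {F : Type*} [Field F] [LinearOrder F] [IsStrictOrderedRing F]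
    {p a : ℕ} (hp : 1 ≤ p) (ha : 0 < a) {c : F} (hc : 0 ≤ c)
    {e : ℤ → ℤ} (he : Function.Periodic e (a : ℤ))
    (hω : ∑ i ∈ Finset.range a, e i ≤ a * ((p : ℤ) - 1))
    {R : Type*} [NonUnitalNonAssocSemiring R] {v : R → WithTop F}
    (hv_add : ∀ x y, min (v x) (v y) ≤ v (x + y)) (hv_mul : ∀ x y, v x + v y ≤ v (x * y))
    (hv_zero : v 0 = ⊤) {α f : ℤ → R}
    (hα : ∀ k : ℤ, 0 ≤ k → ((k * c : F) : WithTop F) ≤ v (α k)) (j : ℤ)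
    (hf : ∀ k : ℤ, 1 ≤ k →
      ((tailExponent e a j / a * c + p * c + (k - 1) * c : F) : WithTop F) ≤ v (f k))
    {m : ℤ} (hm : 1 ≤ m) :
    ((tailExponent e a (j + 1) / a * c + p * c + (m - 1) * c : F) : WithTop F) ≤
      v (∑ k ∈ Finset.Icc 1 (p * m - e j), α (p * m - e j - k) * f k) := by
  set b : F := tailExponent e a j / a * c + p * c - c with hb
  have hα' : ∀ k : ℤ, 0 ≤ k → ((0 + k • c : F) : WithTop F) ≤ v (α k) := by
    simpa only [zero_add, zsmul_eq_mul] using hα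
  have hf' : ∀ k : ℤ, 1 ≤ k → ((b + k • c : F) : WithTop F) ≤ v (f k) := fun k hk => by
    convert hf k hk using 2
    rw [hb, zsmul_eq_mul]
    ring
  refine le_trans (WithTop.coe_le_coe.2 ?_)
    (le_map_convolution hv_add hv_mul hv_zero hα' hf' (p * m - e j))
  have exponents := mul_le_mul_of_nonneg_right
    (tailExponent_add_one_div_add_le (F := F) hp ha he hω j hm) hc
  rw [hb, zsmul_eq_mul]
  push_cast
  linarith

/-- Coefficientwise form of the first containment of Proposition 4.1 ("type 1" local
`U_p` estimate), `U_p ∘ A (𝒟_{e,s}) ⊆ 𝒟_{e,s}` on tail components. -/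
theorem stmt1
    (p a s : ℕ) (hp : p.Prime) (hp3 : 3 ≤ p) (ha : 0 < a) (hs : 0 < s)
    (c : ℝ) (hc : c = 1 / (s * (p - 1)))
    (e : ℤ → ℤ) (he : ∀ i : ℤ, e (i + a) = e i)
    (he0 : ∀ i : ℤ, 0 ≤ e i) (he1 : ∀ i : ℤ, e i ≤ (p : ℤ) - 1)
    (ω : ℤ) (hω : ω = ∑ i ∈ Finset.range a, e i)
    (q : ℤ → ℤ) (hq : ∀ j : ℤ, q j = -∑ i ∈ Finset.range a, ((i : ℤ) + 1) * e (i + j))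
    (K : Type*) [Field K]
    (v : K → WithTop ℝ)
    (hv_add : ∀ x y : K, min (v x) (v y) ≤ v (x + y))
    (hv_mul : ∀ x y : K, v (x * y) = v x + v y)
    (hv_zero : v 0 = ⊤)
    (α : ℤ → K) (hαneg : ∀ k : ℤ, k < 0 → α k = 0)
    (hα : ∀ k : ℤ, 0 ≤ k → (((k : ℝ) * c : ℝ) : WithTop ℝ) ≤ v (α k))
    (j : ℤ)
    (f : ℤ → K) (hf0 : ∀ k : ℤ, k ≤ 0 → f k = 0)
    (hf : ∀ k : ℤ, 1 ≤ k →
      (((q j : ℝ) / (a : ℝ) * c + (p : ℝ) * c + ((k : ℝ) - 1) * c : ℝ) : WithTop ℝ) ≤ v (f k)) :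
    ∀ m : ℤ, 1 ≤ m →
      (((q (j + 1) : ℝ) / (a : ℝ) * c + (p : ℝ) * c + ((m : ℝ) - 1) * c : ℝ) : WithTop ℝ)
        ≤ v (∑ k ∈ Finset.Icc (1 : ℤ) ((p : ℤ) * m - e j),
              α ((p : ℤ) * m - e j - k) * f k) := by
  obtain rfl : q = tailExponent e a := funext hq
  have hc0 : 0 ≤ c :=
    hc ▸ one_div_nonneg.2 (mul_nonneg s.cast_nonneg (sub_nonneg.2 (Nat.one_le_cast.2 hp.one_le)))
  have hω' : ∑ i ∈ Finset.range a, e i ≤ a * ((p : ℤ) - 1) := by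
    simpa using Finset.sum_le_card_nsmul (Finset.range a) (e ·) _ fun i _ => he1 i
  exact fun m hm =>
    stmt1_general hp.one_le ha hc0 he hω' hv_add (fun x y => (hv_mul x y).ge) hv_zero hα j hf hm
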